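/- arXiv:2105.07118 — 6 statements merged into one kernel-verified Lean document; each statement's English description precedes it below -/
import Mathlib

section
/- Let V be a finite-dimensional real normed vector space with complementary subspaces S and U (V = S ⊕ U), and let P_S, P_U denote the linear projections onto S along U and onto U along S. Let λ ∈ (0,1), n ≥ 1 a natural number, and γ ∈ (0,1). Let L : V → V be a linear map with L(S) ⊆ S, L(U) ⊆ U, ‖L s‖ ≤ λ^n ‖s‖ for all s ∈ S, and ‖L u‖ ≥ λ^{-n} ‖u‖ for all u ∈ U. Then there exists ε > 0 such that for every linear map L' : V → V satisfying ‖L' v − L v‖ ≤ ε‖v‖ for all v ∈ V, and for every nonzero v ∈ V with ‖P_S v‖ ≤ γ‖P_U v‖, one has ‖P_S (L' v)‖ < γ ‖P_U (L' v)‖ (i.e. L' maps the γ-unstable cone minus the origin into the interior of the γ-unstable cone). -/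
/-- Cone-invariance lemma (forward half): a linear map `L'` close enough to a
hyperbolic-split linear map `L` maps the `γ`-unstable cone minus the origin
strictly into the `γ`-unstable cone. -/
theorem stmt0
    {V : Type*} [NormedAddCommGroup V] [NormedSpace ℝ V] [FiniteDimensional ℝ V]
    (S U : Submodule ℝ V) (hSU : IsCompl S U)
    (PS PU : V →ₗ[ℝ] V)
    (hPSmem : ∀ v, PS v ∈ S) (hPUmem : ∀ v, PU v ∈ U)
    (hsum : ∀ v, PS v + PU v = v)
    (lam : ℝ) (hlam0 : 0 < lam) (hlam1 : lam < 1)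
    (n : ℕ) (hn : 1 ≤ n)
    (gam : ℝ) (hgam0 : 0 < gam) (hgam1 : gam < 1)
    (L : V →ₗ[ℝ] V)
    (hLS : ∀ s ∈ S, L s ∈ S) (hLU : ∀ u ∈ U, L u ∈ U)
    (hLs : ∀ s ∈ S, ‖L s‖ ≤ lam ^ n * ‖s‖)
    (hLu : ∀ u ∈ U, lam⁻¹ ^ n * ‖u‖ ≤ ‖L u‖) :
    ∃ ε > (0 : ℝ), ∀ L' : V →ₗ[ℝ] V, (∀ v, ‖L' v - L v‖ ≤ ε * ‖v‖) →
      ∀ v : V, v ≠ 0 → ‖PS v‖ ≤ gam * ‖PU v‖ →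
        ‖PS (L' v)‖ < gam * ‖PU (L' v)‖ := by
  have hcomm : ∀ v, PS (L v) = L (PS v) ∧ PU (L v) = L (PU v) := by
    intro v
    have h1 : PS (L v) + PU (L v) = L (PS v) + L (PU v) := by
      rw [hsum, ← map_add, hsum]
    have h2 : PS (L v) - L (PS v) = L (PU v) - PU (L v) := by
      rw [sub_eq_sub_iff_add_eq_add, h1, add_comm]
    have hS : PS (L v) - L (PS v) ∈ S := S.sub_mem (hPSmem _) (hLS _ (hPSmem _))
    have hU : PS (L v) - L (PS v) ∈ U := by
      rw [h2]
      exact U.sub_mem (hLU _ (hPUmem _)) (hPUmem _)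
    have h0 : PS (L v) - L (PS v) = 0 := Submodule.disjoint_def.mp hSU.disjoint _ hS hU
    have h3 : L (PU v) - PU (L v) = 0 := by rw [← h2, h0]
    exact ⟨sub_eq_zero.mp h0, (sub_eq_zero.mp h3).symm⟩
  obtain ⟨C, hC, hCS, hCU⟩ : ∃ C > (0 : ℝ), (∀ x, ‖PS x‖ ≤ C * ‖x‖) ∧ (∀ x, ‖PU x‖ ≤ C * ‖x‖) := by
    have hS : ∀ x, ‖PS x‖ ≤ ‖LinearMap.toContinuousLinearMap PS‖ * ‖x‖ := fun x =>
      (LinearMap.toContinuousLinearMap PS).le_opNorm x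
    have hU : ∀ x, ‖PU x‖ ≤ ‖LinearMap.toContinuousLinearMap PU‖ * ‖x‖ := fun x =>
      (LinearMap.toContinuousLinearMap PU).le_opNorm x
    have nS := norm_nonneg (LinearMap.toContinuousLinearMap PS)
    have nU := norm_nonneg (LinearMap.toContinuousLinearMap PU)
    refine ⟨‖LinearMap.toContinuousLinearMap PS‖ + ‖LinearMap.toContinuousLinearMap PU‖ + 1,
      by linarith, fun x => (hS x).trans ?_, fun x => (hU x).trans ?_⟩
    · exact mul_le_mul_of_nonneg_right (by linarith) (norm_nonneg x)
    · exact mul_le_mul_of_nonneg_right (by linarith) (norm_nonneg x)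
  have ha0 : 0 ≤ lam ^ n := by positivity
  have ha : lam ^ n < 1 := pow_lt_one₀ hlam0.le hlam1 (by omega)
  have hb : 1 ≤ lam⁻¹ ^ n := one_le_pow₀ ((one_le_inv₀ hlam0).mpr hlam1.le)
  generalize lam ^ n = a at *
  generalize lam⁻¹ ^ n = b at *
  have hd : 0 < gam * (b - a) := mul_pos hgam0 (by linarith)
  refine ⟨gam * (b - a) / (8 * C), by positivity, ?_⟩
  intro L' hL' v hv hcone
  have hu : 0 < ‖PU v‖ := by
    rcases (norm_nonneg (PU v)).eq_or_lt with h | h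
    · exfalso
      rw [← h, mul_zero] at hcone
      apply hv
      rw [← hsum v, norm_le_zero_iff.mp hcone, norm_eq_zero.mp h.symm, add_zero]
    · exact h
  have hvn : ‖v‖ ≤ 2 * ‖PU v‖ := by
    have := norm_add_le (PS v) (PU v)
    rw [hsum] at this
    nlinarith
  have hE : C * ‖L' v - L v‖ ≤ gam * (b - a) / 4 * ‖PU v‖ := by
    calc C * ‖L' v - L v‖ ≤ C * (gam * (b - a) / (8 * C) * (2 * ‖PU v‖)) := by
          refine mul_le_mul_of_nonneg_left ((hL' v).trans ?_) hC.le
          exact mul_le_mul_of_nonneg_left hvn (by positivity)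
      _ = gam * (b - a) / 4 * ‖PU v‖ := by field_simp; ring
  have hES := (hCS (L' v - L v)).trans hE
  have hEU := (hCU (L' v - L v)).trans hE
  rw [map_sub, (hcomm v).1] at hES
  rw [map_sub, (hcomm v).2] at hEU
  have k1 := hLs _ (hPSmem v)
  have k2 := hLu _ (hPUmem v)
  have k3 := norm_le_norm_add_norm_sub' (PS (L' v)) (L (PS v))
  have k4 := norm_le_norm_add_norm_sub (PU (L' v)) (L (PU v))
  have m1 : a * ‖PS v‖ ≤ a * (gam * ‖PU v‖) := mul_le_mul_of_nonneg_left hcone ha0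
  have hX : 0 < gam * (b - a) * ‖PU v‖ := mul_pos hd hu
  have m2 : gam * (b * ‖PU v‖ - gam * (b - a) / 4 * ‖PU v‖) ≤ gam * ‖PU (L' v)‖ :=
    mul_le_mul_of_nonneg_left (by linarith) hgam0.le
  have m3 : gam * (gam * (b - a) * ‖PU v‖) < 1 * (gam * (b - a) * ‖PU v‖) :=
    mul_lt_mul_of_pos_right hgam1 hX
  nlinarith
end

section
/- Let V be a finite-dimensional real normed vector space with complementary subspaces S and U (V = S ⊕ U), and let P_S, P_U denote the linear projections onto S along U and onto U along S. Let λ ∈ (0,1), n ≥ 1 a natural number, and γ ∈ (0,1). Let L : V → V be a linear map with L(S) ⊆ S, L(U) ⊆ U, ‖L s‖ ≤ λ^n ‖s‖ for all s ∈ S, and ‖L u‖ ≥ λ^{-n} ‖u‖ for all u ∈ U. Then there exists ε > 0 such that for every invertible linear map L' : V → V satisfying ‖L' v − L v‖ ≤ ε‖v‖ for all v ∈ V, and for every nonzero v ∈ V with ‖P_U v‖ ≤ γ‖P_S v‖, one has ‖P_U (L'^{-1} v)‖ < γ ‖P_S (L'^{-1} v)‖ (i.e. L'^{-1} maps the γ-stable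 cone minus the origin into the interior of the γ-stable cone). -/
/-- Cone-invariance lemma (backward half): the inverse of an invertible linear map `L'`
close enough to a hyperbolic-split linear map `L` maps the `γ`-stable cone minus the
origin strictly into the `γ`-stable cone. -/
theorem stmt1
    {V : Type*} [NormedAddCommGroup V] [NormedSpace ℝ V] [FiniteDimensional ℝ V]
    (S U : Submodule ℝ V) (hSU : IsCompl S U)
    (PS PU : V →ₗ[ℝ] V)
    (hPSmem : ∀ v, PS v ∈ S) (hPUmem : ∀ v, PU v ∈ U)
    (hsum : ∀ v, PS v + PU v = v)
    (lam : ℝ) (hlam0 : 0 < lam) (hlam1 : lam < 1)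
    (n : ℕ) (hn : 1 ≤ n)
    (gam : ℝ) (hgam0 : 0 < gam) (hgam1 : gam < 1)
    (L : V →ₗ[ℝ] V)
    (hLS : ∀ s ∈ S, L s ∈ S) (hLU : ∀ u ∈ U, L u ∈ U)
    (hLs : ∀ s ∈ S, ‖L s‖ ≤ lam ^ n * ‖s‖)
    (hLu : ∀ u ∈ U, lam⁻¹ ^ n * ‖u‖ ≤ ‖L u‖) :
    ∃ ε > (0 : ℝ), ∀ L' : V ≃ₗ[ℝ] V, (∀ v, ‖L' v - L v‖ ≤ ε * ‖v‖) →
      ∀ v : V, v ≠ 0 → ‖PU v‖ ≤ gam * ‖PS v‖ →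
        ‖PU (L'.symm v)‖ < gam * ‖PS (L'.symm v)‖ := by
  have hUS : ∀ x ∈ S, PU x = 0 := fun x hx => by
    have h1 : PU x ∈ S := by
      rw [show PU x = x - PS x from eq_sub_of_add_eq' (hsum x)]
      exact S.sub_mem hx (hPSmem x)
    exact Submodule.disjoint_def.1 hSU.disjoint _ h1 (hPUmem x)
  have hSU' : ∀ x ∈ U, PS x = 0 := fun x hx => by
    have h1 : PS x ∈ U := by
      rw [show PS x = x - PU x from eq_sub_of_add_eq (hsum x)]
      exact U.sub_mem hx (hPUmem x)
    exact Submodule.disjoint_def.1 hSU.disjoint _ (hPSmem x) h1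
  have hLw : ∀ w, L w = L (PS w) + L (PU w) := fun w => by rw [← map_add, hsum]
  have hPUL : ∀ w, PU (L w) = L (PU w) := fun w => by
    have h := hsum (L (PU w))
    rw [hSU' _ (hLU _ (hPUmem w)), zero_add] at h
    rw [hLw, map_add, hUS _ (hLS _ (hPSmem w)), zero_add, h]
  have hPSL : ∀ w, PS (L w) = L (PS w) := fun w => by
    have h := hsum (L (PS w))
    rw [hUS _ (hLS _ (hPSmem w)), add_zero] at h
    rw [hLw, map_add, hSU' _ (hLU _ (hPUmem w)), add_zero, h]
  obtain ⟨C, hC, hCS, hCU⟩ : ∃ C > (0 : ℝ), (∀ x, ‖PS x‖ ≤ C * ‖x‖) ∧ ∀ x, ‖PU x‖ ≤ C * ‖x‖ := by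
    refine ⟨‖LinearMap.toContinuousLinearMap PS‖ + ‖LinearMap.toContinuousLinearMap PU‖ + 1,
      by positivity, fun x => ?_, fun x => ?_⟩
    · refine ((LinearMap.toContinuousLinearMap PS).le_opNorm x).trans ?_
      gcongr
      linarith [norm_nonneg (LinearMap.toContinuousLinearMap PU)]
    · refine ((LinearMap.toContinuousLinearMap PU).le_opNorm x).trans ?_
      gcongr
      linarith [norm_nonneg (LinearMap.toContinuousLinearMap PS)]
  have hm1 : lam ^ n < 1 := pow_lt_one₀ hlam0.le hlam1 (by omega)
  have hm0 : 0 < lam ^ n := pow_pos hlam0 n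
  have hi : 1 ≤ lam⁻¹ ^ n := one_le_pow₀ ((one_le_inv₀ hlam0).2 hlam1.le)
  generalize lam ^ n = m at *
  have hd : 0 < 1 - m := by linarith
  refine ⟨gam * (1 - m) / (8 * C), by positivity, fun L' hL' v hv hcone => ?_⟩
  by_contra! hcon
  obtain ⟨w, rfl⟩ := L'.surjective v
  rw [L'.symm_apply_apply] at hcon
  set e := L' w - L w with he
  have hLe : L' w = L w + e := by rw [he]; abel
  have hn : ‖w‖ ≤ ‖PS w‖ + ‖PU w‖ := by
    conv_lhs => rw [← hsum w]
    exact norm_add_le _ _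
  have hCe : C * ‖e‖ ≤ gam * (1 - m) / 8 * (‖PS w‖ + ‖PU w‖) := by
    calc C * ‖e‖ ≤ C * (gam * (1 - m) / (8 * C) * (‖PS w‖ + ‖PU w‖)) := by
          gcongr
          exact (hL' w).trans (by gcongr)
      _ = _ := by field_simp
  have hu : ‖PU w‖ ≤ ‖PU (L' w)‖ + C * ‖e‖ := by
    have h1 : ‖PU w‖ ≤ ‖L (PU w)‖ :=
      (le_mul_of_one_le_left (norm_nonneg _) hi).trans (hLu _ (hPUmem w))
    have h2 : L (PU w) = PU (L' w) - PU e := by rw [hLe, map_add, hPUL]; abel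
    rw [h2] at h1
    linarith [norm_sub_le (PU (L' w)) (PU e), hCU e]
  have hs : ‖PS (L' w)‖ ≤ m * ‖PS w‖ + C * ‖e‖ := by
    rw [hLe, map_add, hPSL]
    linarith [norm_add_le (L (PS w)) (PS e), hCS e, hLs _ (hPSmem w)]
  have hb0 := norm_nonneg (PU w)
  have ha0 := norm_nonneg (PS w)
  have hg1 : gam * ‖PS (L' w)‖ ≤ m * ‖PU w‖ + C * ‖e‖ := by
    have h1 := mul_le_mul_of_nonneg_left hs hgam0.le
    have h2 := mul_le_mul_of_nonneg_left hcon hm0.le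
    have h3 : gam * (C * ‖e‖) ≤ C * ‖e‖ := mul_le_of_le_one_left (by positivity) hgam1.le
    linarith
  have hg2 : gam * (1 - m) / 8 * (‖PS w‖ + ‖PU w‖) ≤ (1 - m) * ‖PU w‖ / 4 := by
    have h1 : gam * ‖PU w‖ ≤ ‖PU w‖ := mul_le_of_le_one_left hb0 hgam1.le
    have h2 : gam * (‖PS w‖ + ‖PU w‖) ≤ 2 * ‖PU w‖ := by linarith
    have h3 := mul_le_mul_of_nonneg_left h2 hd.le
    linarith
  have hb : (1 - m) * ‖PU w‖ ≤ 0 := by linarith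
  have hb' : ‖PU w‖ = 0 := le_antisymm (nonpos_of_mul_nonpos_right hb hd) hb0
  have ha' : ‖PS w‖ = 0 := by
    rw [hb'] at hcon
    exact le_antisymm (nonpos_of_mul_nonpos_right hcon hgam0) ha0
  apply hv
  rw [← hsum w, norm_eq_zero.1 hb', norm_eq_zero.1 ha', add_zero, map_zero]
end

section
/- Let V be a finite-dimensional real normed vector space with complementary subspaces S and U (V = S ⊕ U), and let P_S, P_U denote the linear projections onto S along U and onto U along S. Let γ > 0 and μ > 0. Let L : V → V be a linear map with L(S) ⊆ S, L(U) ⊆ U, and ‖L u‖ ≤ μ‖u‖ for all u ∈ U, and suppose L maps the γ-unstable cone C_u^γ = {v ∈ V : ‖P_S v‖ ≤ γ‖P_U v‖} into itself. Then for every v ∈ C_u^γ one has ‖L v‖ ≤ (1+γ)·μ·‖P_U‖·‖v‖, where ‖P_U‖ is the operator norm of the projection P_U. In particular, if (1+γ)·μ·‖P_U‖ < 1, then L contracts every vector of the cone C_u^γ. -/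
/-- Vectors in an invariant unstable cone are uniformly contracted (Lemma 4.3):
if `L` preserves the splitting, contracts `U` by a factor `μ`, and maps the
`γ`-unstable cone into itself, then `‖L v‖ ≤ (1+γ)·μ·‖P_U‖·‖v‖` on the cone;
in particular `L` contracts every vector of the cone when `(1+γ)·μ·‖P_U‖ < 1`. -/
theorem stmt2
    {V : Type*} [NormedAddCommGroup V] [NormedSpace ℝ V] [FiniteDimensional ℝ V]
    (S U : Submodule ℝ V) (hSU : IsCompl S U)
    (PS PU : V →L[ℝ] V)
    (hPSmem : ∀ v, PS v ∈ S) (hPUmem : ∀ v, PU v ∈ U)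
    (hsum : ∀ v, PS v + PU v = v)
    (gam mu : ℝ) (hgam : 0 < gam) (hmu : 0 < mu)
    (L : V →ₗ[ℝ] V)
    (hLS : ∀ s ∈ S, L s ∈ S) (hLU : ∀ u ∈ U, L u ∈ U)
    (hLu : ∀ u ∈ U, ‖L u‖ ≤ mu * ‖u‖)
    (hcone : ∀ v, ‖PS v‖ ≤ gam * ‖PU v‖ → ‖PS (L v)‖ ≤ gam * ‖PU (L v)‖) :
    (∀ v, ‖PS v‖ ≤ gam * ‖PU v‖ → ‖L v‖ ≤ (1 + gam) * mu * ‖PU‖ * ‖v‖) ∧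
      ((1 + gam) * mu * ‖PU‖ < 1 →
        ∀ v, v ≠ 0 → ‖PS v‖ ≤ gam * ‖PU v‖ → ‖L v‖ < ‖v‖) := by
  have hcomm : ∀ v, PU (L v) = L (PU v) := by
    intro v
    have h1 : PU (L v) - L (PU v) ∈ U := U.sub_mem (hPUmem _) (hLU _ (hPUmem v))
    have h2 : PU (L v) - L (PU v) = L (PS v) - PS (L v) := by
      have h3 : PS (L v) + PU (L v) = L (PS v) + L (PU v) := by
        rw [hsum, ← map_add, hsum]
      rw [sub_eq_sub_iff_add_eq_add, add_comm, h3]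
    have h4 : PU (L v) - L (PU v) ∈ S := by
      rw [h2]
      exact S.sub_mem (hLS _ (hPSmem v)) (hPSmem _)
    exact sub_eq_zero.mp (Submodule.disjoint_def.mp hSU.disjoint _ h4 h1)
  have main : ∀ v, ‖PS v‖ ≤ gam * ‖PU v‖ → ‖L v‖ ≤ (1 + gam) * mu * ‖PU‖ * ‖v‖ := by
    intro v hv
    calc ‖L v‖ = ‖PS (L v) + PU (L v)‖ := by rw [hsum]
      _ ≤ ‖PS (L v)‖ + ‖PU (L v)‖ := norm_add_le _ _
      _ ≤ (1 + gam) * ‖PU (L v)‖ := by linarith [hcone v hv]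
      _ = (1 + gam) * ‖L (PU v)‖ := by rw [hcomm]
      _ ≤ (1 + gam) * (mu * ‖PU v‖) := by
        gcongr
        exact hLu _ (hPUmem v)
      _ ≤ (1 + gam) * (mu * (‖PU‖ * ‖v‖)) := by
        gcongr
        exact PU.le_opNorm v
      _ = (1 + gam) * mu * ‖PU‖ * ‖v‖ := by ring
  refine ⟨main, fun hlt v hv0 hv => (main v hv).trans_lt ?_⟩
  have := mul_lt_mul_of_pos_right hlt (norm_pos_iff.mpr hv0)
  linarith
end

section
/- Let V be a finite-dimensional real normed vector space and l a natural number. Let (T_i)_{i ∈ ℕ} be a decreasing sequence of closed subsets of V (T_{i+1} ⊆ T_i for all i) such that each T_i contains some l-dimensional linear subspace of V. Then the intersection ∩_{i ∈ ℕ} T_i contains an l-dimensional linear subspace of V. -/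
/-- Nested closed sets each containing an `l`-dimensional subspace have an
`l`-dimensional subspace in their intersection (compactness argument of Lemma 4.4). -/
theorem stmt3
    {V : Type*} [NormedAddCommGroup V] [NormedSpace ℝ V] [FiniteDimensional ℝ V]
    (l : ℕ) (T : ℕ → Set V)
    (hclosed : ∀ i, IsClosed (T i))
    (hdec : ∀ i, T (i + 1) ⊆ T i)
    (hsub : ∀ i, ∃ W : Submodule ℝ V, Module.finrank ℝ W = l ∧ (W : Set V) ⊆ T i) :
    ∃ W : Submodule ℝ V, Module.finrank ℝ W = l ∧ (W : Set V) ⊆ ⋂ i, T i := by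
  let n := Module.finrank ℝ V
  let e : V ≃L[ℝ] EuclideanSpace ℝ (Fin n) := toEuclidean
  let K : ℕ → Set (Fin l → EuclideanSpace ℝ (Fin n)) := fun i =>
    {f | Orthonormal ℝ f} ∩ {f | ∀ c : Fin l → ℝ, e.symm (∑ j, c j • f j) ∈ T i}
  have hKc : ∀ i, IsClosed (K i) := by
    intro i
    apply IsClosed.inter
    · simp only [orthonormal_iff_ite, Set.setOf_forall]
      refine isClosed_iInter fun a => isClosed_iInter fun b => ?_
      exact isClosed_eq (by fun_prop) continuous_const
    · simp only [Set.setOf_forall]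
      refine isClosed_iInter fun c => ?_
      exact (hclosed i).preimage (f := fun f : Fin l → EuclideanSpace ℝ (Fin n) =>
        e.symm (∑ j, c j • f j)) (by fun_prop)
  have hK0 : IsCompact (K 0) := by
    refine IsCompact.of_isClosed_subset (isCompact_univ_pi
      (fun _ : Fin l => isCompact_closedBall (0 : EuclideanSpace ℝ (Fin n)) 1)) (hKc 0) ?_
    intro f hf j _
    simpa using (hf.1.1 j).le
  have hne : ∀ i, (K i).Nonempty := by
    intro i
    obtain ⟨W, hW, hWT⟩ := hsub i
    let W' := W.map (e.toLinearEquiv : V →ₗ[ℝ] EuclideanSpace ℝ (Fin n))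
    have hW' : Module.finrank ℝ W' = l := by
      rw [← hW]; exact LinearEquiv.finrank_map_eq e.toLinearEquiv W
    let b := (stdOrthonormalBasis ℝ W').reindex (finCongr hW')
    refine ⟨fun j => (b j : EuclideanSpace ℝ (Fin n)), ?_, ?_⟩
    · exact b.orthonormal.comp_linearIsometry W'.subtypeₗᵢ
    · intro c
      apply hWT
      have h : ∑ j, c j • (b j : EuclideanSpace ℝ (Fin n)) ∈ W' :=
        Submodule.sum_mem _ fun j _ => W'.smul_mem _ (b j).2
      obtain ⟨w, hw, hwe⟩ := h
      rw [← hwe]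
      simpa using hw
  obtain ⟨f, hf⟩ := IsCompact.nonempty_iInter_of_sequence_nonempty_isCompact_isClosed K
    (fun i f hf => ⟨hf.1, fun c => hdec i (hf.2 c)⟩) hne hK0 hKc
  rw [Set.mem_iInter] at hf
  refine ⟨(Submodule.span ℝ (Set.range f)).map
    (e.symm.toLinearEquiv : EuclideanSpace ℝ (Fin n) →ₗ[ℝ] V), ?_, ?_⟩
  · rw [LinearEquiv.finrank_map_eq, finrank_span_eq_card (hf 0).1.linearIndependent,
      Fintype.card_fin]
  · rintro _ ⟨x, hx, rfl⟩
    obtain ⟨c, rfl⟩ := (Submodule.mem_span_range_iff_exists_fun ℝ).1 hx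
    exact Set.mem_iInter.2 fun i => (hf i).2 c
end

section
/- Let d ≥ 1 and let A : ℝ^d → ℝ^d be a linear automorphism which is hyperbolic in the following sense: there are subspaces S, U of ℝ^d with ℝ^d = S ⊕ U, A(S) = S, A(U) = U, and constants C > 0, λ ∈ (0,1) such that ‖A^n s‖ ≤ Cλ^n‖s‖ for all n ≥ 0 and s ∈ S, and ‖A^{-n} u‖ ≤ Cλ^n‖u‖ for all n ≥ 0 and u ∈ U. Let E be a compact topological space, F : E → E a homeomorphism, and r : E → ℝ^d a continuous map. Then there exists a continuous map w : E → ℝ^d such that A(w(e)) − w(F(e)) = r(e) for all e ∈ E. -/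
theorem stmt7_series {d : ℕ} (B : (Fin d → ℝ) →ₗ[ℝ] (Fin d → ℝ)) {E : Type*}
    [TopologicalSpace E] [CompactSpace E] (G : E → E) (hG : Continuous G)
    (q : E → (Fin d → ℝ)) (hq : Continuous q) (C lam : ℝ) (hC : 0 < C)
    (hlam0 : 0 < lam) (hlam1 : lam < 1)
    (h : ∀ n : ℕ, ∀ e, ‖(B ^ n) (q e)‖ ≤ C * lam ^ n * ‖q e‖) :
    ∃ v : E → (Fin d → ℝ), Continuous v ∧ ∀ e, v e = q e + B (v (G e)) := by
  obtain ⟨M, hM⟩ := isCompact_univ.exists_bound_of_continuousOn hq.continuousOn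
  have hb : ∀ n e, ‖(B ^ n) (q (G^[n] e))‖ ≤ C * lam ^ n * M := fun n e =>
    (h n _).trans (mul_le_mul_of_nonneg_left (hM _ (Set.mem_univ _)) (by positivity))
  have hs : Summable (fun n : ℕ => C * lam ^ n * M) :=
    ((summable_geometric_of_lt_one hlam0.le hlam1).mul_left C).mul_right M
  have hsum : ∀ e, Summable (fun n : ℕ => (B ^ n) (q (G^[n] e))) := fun e =>
    Summable.of_norm_bounded hs (fun n => hb n e)
  refine ⟨fun e => ∑' n : ℕ, (B ^ n) (q (G^[n] e)), ?_, ?_⟩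
  · refine continuous_tsum (fun n => ?_) hs hb
    exact (LinearMap.continuous_of_finiteDimensional (B ^ n)).comp (hq.comp (hG.iterate n))
  · intro e
    have hBc : Continuous B := LinearMap.continuous_of_finiteDimensional B
    have h1 := ((hsum (G e)).hasSum.map B hBc).tsum_eq
    simp only
    rw [(hsum e).tsum_eq_zero_add, ← h1]
    simp [pow_succ']

/-- Proposition 5.1 (combined series construction): for a hyperbolic linear
automorphism `A` of `ℝ^d` and a homeomorphism `F` of a compact space `E`, every
continuous `r : E → ℝ^d` admits a continuous solution `w` of the twisted
cohomological equation `A (w e) - w (F e) = r e`. -/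
theorem stmt7
    (d : ℕ) (hd : 1 ≤ d)
    (A : (Fin d → ℝ) ≃ₗ[ℝ] (Fin d → ℝ))
    (S U : Submodule ℝ (Fin d → ℝ)) (hSU : IsCompl S U)
    (hAS : S.map (A : (Fin d → ℝ) →ₗ[ℝ] (Fin d → ℝ)) = S)
    (hAU : U.map (A : (Fin d → ℝ) →ₗ[ℝ] (Fin d → ℝ)) = U)
    (C lam : ℝ) (hC : 0 < C) (hlam0 : 0 < lam) (hlam1 : lam < 1)
    (hstab : ∀ n : ℕ, ∀ s ∈ S, ‖(A ^ n) s‖ ≤ C * lam ^ n * ‖s‖)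
    (hunst : ∀ n : ℕ, ∀ u ∈ U, ‖(A⁻¹ ^ n) u‖ ≤ C * lam ^ n * ‖u‖)
    {E : Type*} [TopologicalSpace E] [CompactSpace E]
    (F : E ≃ₜ E) (r : E → (Fin d → ℝ)) (hr : Continuous r) :
    ∃ w : E → (Fin d → ℝ), Continuous w ∧ ∀ e : E, A (w e) - w (F e) = r e := by
  set P := S.projectionOnto U hSU with hP
  have hPc : Continuous fun e => (P (r e) : Fin d → ℝ) :=
    (LinearMap.continuous_of_finiteDimensional (S.subtype ∘ₗ P)).comp hr
  have hU : ∀ x, x - (P x : Fin d → ℝ) ∈ U := by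
    intro x
    rw [← Submodule.projectionOnto_apply_eq_zero_iff hSU, map_sub, Submodule.projectionOnto_apply_left, sub_self]
  have e1 : ∀ n x, ((A : (Fin d → ℝ) →ₗ[ℝ] (Fin d → ℝ)) ^ n) x = (A ^ n) x := by
    intro n
    induction n with
    | zero => intro x; simp
    | succ k ih => intro x; simp [pow_succ, ih]
  have e2 : ∀ n x, ((A.symm : (Fin d → ℝ) →ₗ[ℝ] (Fin d → ℝ)) ^ n) x = (A⁻¹ ^ n) x := by
    intro n
    induction n with
    | zero => intro x; simp
    | succ k ih => intro x; simp only [pow_succ, Module.End.mul_apply, ih]; rfl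
  obtain ⟨v, hv, hv'⟩ := stmt7_series (A : (Fin d → ℝ) →ₗ[ℝ] (Fin d → ℝ)) F.symm
    F.symm.continuous (fun e => (P (r e) : Fin d → ℝ)) hPc C lam hC hlam0 hlam1
    (fun n e => by rw [e1]; exact hstab n _ (P (r e)).2)
  obtain ⟨z, hz, hz'⟩ := stmt7_series (A.symm : (Fin d → ℝ) →ₗ[ℝ] (Fin d → ℝ)) F
    F.continuous (fun e => r e - (P (r e) : Fin d → ℝ)) (hr.sub hPc) C lam hC hlam0 hlam1
    (fun n e => by rw [e2]; exact hunst n _ (hU _))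
  refine ⟨fun e => A.symm (z e) - v (F.symm e), ?_, ?_⟩
  · exact ((LinearMap.continuous_of_finiteDimensional
      (A.symm : (Fin d → ℝ) →ₗ[ℝ] (Fin d → ℝ))).comp hz).sub (hv.comp F.symm.continuous)
  · intro e
    have a := hv' e
    have b := hz' e
    simp only [LinearEquiv.coe_coe] at a b
    simp only [map_sub, LinearEquiv.apply_symm_apply, Homeomorph.symm_apply_apply]
    rw [a, b]
    abel
end

section
/- Let d ≥ 1, let 𝕋^d = ℝ^d/ℤ^d be the standard d-dimensional torus with quotient homomorphism π : ℝ^d → 𝕋^d. Let A be a d×d integer matrix with determinant ±1 which is hyperbolic: there are subspaces S, U of ℝ^d with ℝ^d = S ⊕ U, A(S) = S, A(U) = U, and constants C > 0, λ ∈ (0,1) such that ‖A^n s‖ ≤ Cλ^n‖s‖ and ‖A^{-n} u‖ ≤ Cλ^n‖u‖ for all n ≥ 0, s ∈ S, u ∈ U. Let L_A : 𝕋^d → 𝕋^d be the induced automorphism (L_A ∘ π = π ∘ (x ↦ Ax)). Let E be a compact topological space equipped with a continuous additive action of 𝕋^d, let G : E → E satisfy G(e + τ) = G(e) + L_A(τ)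 for all e ∈ E and τ ∈ 𝕋^d, and let F : E → E be a homeomorphism for which there exists a continuous map r̃ : E → ℝ^d with G(e) = F(e) + π(r̃(e)) for all e ∈ E. Then there exists a continuous map w : E → 𝕋^d such that the map h : E → E defined by h(e) = e + w(e) is continuous, satisfies h ∘ F = G ∘ h, and is homotopic to the identity of E. -/
/-- The quotient homomorphism `π : ℝ^d → 𝕋^d = ℝ^d/ℤ^d`, with `𝕋^d`
realized as `Fin d → AddCircle 1`. -/
noncomputable def torusProj (d : ℕ) (x : Fin d → ℝ) : Fin d → AddCircle (1 : ℝ) :=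
  fun i => (x i : AddCircle (1 : ℝ))

/-- Solution of `v = g + T (v ∘ φ)` as a geometrically convergent series. -/
theorem exists_twisted_solution {d : ℕ} {E : Type*} [TopologicalSpace E] [CompactSpace E]
    (T : (Fin d → ℝ) →ₗ[ℝ] (Fin d → ℝ)) (C lam : ℝ) (hC : 0 < C) (hlam0 : 0 < lam)
    (hlam1 : lam < 1) (φ : E → E) (hφ : Continuous φ) (g : E → (Fin d → ℝ)) (hg : Continuous g)
    (hb : ∀ n : ℕ, ∀ e : E, ‖(T ^ n) (g e)‖ ≤ C * lam ^ n * ‖g e‖) :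
    ∃ v : E → (Fin d → ℝ), Continuous v ∧ ∀ e, v e = g e + T (v (φ e)) := by
  obtain ⟨K, hK⟩ := isCompact_univ.exists_bound_of_continuousOn hg.continuousOn
  have hT : Continuous T := T.continuous_of_finiteDimensional
  have hbd : ∀ n : ℕ, ∀ e : E, ‖(T ^ n) (g (φ^[n] e))‖ ≤ C * lam ^ n * K := fun n e =>
    (hb n _).trans (mul_le_mul_of_nonneg_left (hK _ (Set.mem_univ _)) (by positivity))
  have hsum : Summable fun n : ℕ => C * lam ^ n * K :=
    ((summable_geometric_of_lt_one hlam0.le hlam1).mul_left C).mul_right K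
  have hs : ∀ e, Summable fun n : ℕ => (T ^ n) (g (φ^[n] e)) := fun e =>
    Summable.of_norm_bounded hsum (fun n => hbd n e)
  refine ⟨fun e => ∑' n : ℕ, (T ^ n) (g (φ^[n] e)), ?_, ?_⟩
  · refine continuous_tsum (fun n => ?_) hsum hbd
    exact (T ^ n).continuous_of_finiteDimensional.comp (hg.comp (hφ.iterate n))
  · intro e
    have h1 := (hs e).tsum_eq_zero_add
    have h2 := (hs (φ e)).map_tsum T hT
    simp only at h1 ⊢
    rw [h1, h2]
    simp [pow_succ', Function.iterate_succ_apply]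

theorem torusProj_add (d : ℕ) (x y : Fin d → ℝ) :
    torusProj d (x + y) = torusProj d x + torusProj d y := by
  ext i; simp [torusProj]

theorem torusProj_continuous (d : ℕ) : Continuous (torusProj d) := by
  unfold torusProj
  exact continuous_pi fun i => (AddCircle.continuous_mk' 1).comp (continuous_apply i)

/-- Proposition 5.1: construction of the semi-conjugacy `h = id + w`, homotopic to
the identity, between a homeomorphism `F` and an `A`-map `G` on a compact space `E`
with a continuous `𝕋^d`-action, where `A` is a hyperbolic integer matrix with
determinant `±1` and the difference `G - F` lifts to a continuous `ℝ^d`-valued map. -/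
theorem stmt9
    (d : ℕ) (hd : 1 ≤ d)
    (A : Matrix (Fin d) (Fin d) ℤ) (hdet : A.det = 1 ∨ A.det = -1)
    (S U : Submodule ℝ (Fin d → ℝ)) (hSU : IsCompl S U)
    (hAS : S.map (A.map (Int.cast : ℤ → ℝ)).mulVecLin = S)
    (hAU : U.map (A.map (Int.cast : ℤ → ℝ)).mulVecLin = U)
    (C lam : ℝ) (hC : 0 < C) (hlam0 : 0 < lam) (hlam1 : lam < 1)
    (hstab : ∀ n : ℕ, ∀ s ∈ S,
      ‖((A.map (Int.cast : ℤ → ℝ)).mulVecLin ^ n) s‖ ≤ C * lam ^ n * ‖s‖)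
    (hunst : ∀ n : ℕ, ∀ u ∈ U,
      ‖(((A.map (Int.cast : ℤ → ℝ))⁻¹).mulVecLin ^ n) u‖ ≤ C * lam ^ n * ‖u‖)
    (LA : (Fin d → AddCircle (1 : ℝ)) → (Fin d → AddCircle (1 : ℝ)))
    (hLA : ∀ x : Fin d → ℝ,
      LA (torusProj d x) = torusProj d ((A.map (Int.cast : ℤ → ℝ)).mulVec x))
    {E : Type*} [TopologicalSpace E] [CompactSpace E]
    [AddAction (Fin d → AddCircle (1 : ℝ)) E]
    [ContinuousVAdd (Fin d → AddCircle (1 : ℝ)) E]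
    (G : E → E)
    (hG : ∀ (e : E) (τ : Fin d → AddCircle (1 : ℝ)), G (τ +ᵥ e) = LA τ +ᵥ G e)
    (F : E ≃ₜ E)
    (rt : E → (Fin d → ℝ)) (hrt : Continuous rt)
    (hr : ∀ e : E, G e = torusProj d (rt e) +ᵥ F e) :
    ∃ w : E → (Fin d → AddCircle (1 : ℝ)), Continuous w ∧
      ∃ h : C(E, E), (∀ e : E, h e = w e +ᵥ e) ∧ (∀ e : E, h (F e) = G (h e)) ∧
        h.Homotopic (ContinuousMap.id E) := by
  set M := A.map (Int.cast : ℤ → ℝ) with hM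
  have hMdet : IsUnit M.det := by
    have h0 : M.det = ((A.det : ℤ) : ℝ) := by
      rw [hM]; exact (Int.cast_det A).symm
    rw [h0]
    rcases hdet with h | h <;> simp [h]
  have hAB : ∀ x, M.mulVecLin (M⁻¹.mulVecLin x) = x := fun x => by
    simp [Matrix.mulVec_mulVec, Matrix.mul_nonsing_inv _ hMdet]
  -- decomposition of `rt`
  obtain ⟨p, hpS, hpU⟩ : ∃ p : (Fin d → ℝ) →ₗ[ℝ] (Fin d → ℝ),
      (∀ x, p x ∈ S) ∧ ∀ x, x - p x ∈ U := by
    refine ⟨S.projection U hSU, fun x => ?_, fun x => ?_⟩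
    · exact Submodule.projection_apply_mem hSU x
    · rw [← Submodule.projection_apply_eq_zero_iff hSU, map_sub, sub_eq_zero]
      exact (Submodule.projection_apply_of_mem_left hSU (Submodule.projection_apply_mem hSU x)).symm
  have hp : Continuous p := p.continuous_of_finiteDimensional
  obtain ⟨a, ha, ha'⟩ := exists_twisted_solution M.mulVecLin C lam hC hlam0 hlam1
    F.symm F.symm.continuous (fun e => p (rt (F.symm e)))
    (hp.comp (hrt.comp F.symm.continuous)) (fun n e => hstab n _ (hpS _))
  obtain ⟨b, hb, hb'⟩ := exists_twisted_solution M⁻¹.mulVecLin C lam hC hlam0 hlam1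
    F F.continuous (fun e => rt e - p (rt e))
    (hrt.sub (hp.comp hrt)) (fun n e => hunst n _ (hpU _))
  obtain ⟨W, hW, hWF⟩ : ∃ W : E → (Fin d → ℝ), Continuous W ∧
      ∀ e, W (F e) = M.mulVec (W e) + rt e := by
    refine ⟨fun e => a e - M⁻¹.mulVecLin (b e), ?_, fun e => ?_⟩
    · exact ha.sub ((M⁻¹.mulVecLin).continuous_of_finiteDimensional.comp hb)
    · have h1 := ha' (F e)
      have h3 := hb' e
      have h4 := hAB (b e)
      simp only [F.symm_apply_apply] at h1
      change a (F e) - M⁻¹.mulVecLin (b (F e)) = M.mulVecLin (a e - M⁻¹.mulVecLin (b e)) + rt e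
      have h5 : M⁻¹.mulVecLin (b (F e)) = b e - (rt e - p (rt e)) := by
        rw [h3]; abel
      rw [map_sub, h4, h1, h5]
      abel
  have hw : Continuous fun e => torusProj d (W e) := (torusProj_continuous d).comp hW
  refine ⟨fun e => torusProj d (W e), hw, ⟨fun e => torusProj d (W e) +ᵥ e, hw.vadd continuous_id⟩,
    fun e => rfl, fun e => ?_, ?_⟩
  · change torusProj d (W (F e)) +ᵥ F e = G (torusProj d (W e) +ᵥ e)
    rw [hG, hLA, hr, hWF, torusProj_add, add_vadd]
  · refine ContinuousMap.Homotopic.symm ⟨⟨⟨fun q => torusProj d ((q.1 : ℝ) • W q.2) +ᵥ q.2, ?_⟩,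
      fun e => ?_, fun e => ?_⟩⟩
    · exact ((torusProj_continuous d).comp (by fun_prop)).vadd continuous_snd
    · have h0 : torusProj d 0 = 0 := by ext i; simp [torusProj]
      simp [h0]
    · simp
end
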